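/- arXiv:2203.03443 — 4 statements merged into one kernel-verified Lean document; each statement's English description precedes it below -/
import Mathlib

section
/- Let n ≥ 1, C ≥ 1, let K be a symmetric positive semidefinite real n×n matrix, let λ > 0 be a regularization parameter, and let Y ∈ ℝ^{n×C} be a target matrix. Set A = K (K + λ I_n)⁻¹. For each index i, let the leave-one-out prediction be the vector f^{-i}(x_i) ∈ ℝ^C whose k-th component is (k^{(i)})ᵀ (K^{(i)} + λ I_{n-1})⁻¹ Y^{(i)}_{•k}, where K^{(i)} is K with its i-th row and column deleted, k^{(i)} is the i-th column of K with its i-th entry deleted, and Y^{(i)} is Y with its i-th row deleted. Then for every i with A_{ii} ≠ 1 and every k ∈ {1,…,C}, the leave-one-out residual satisfies Y_{ik} − f^{-i}_k(x_i) = (Y_{ik} − (A Y)_{ik}) / (1 − A_{ii}). Consequently, the leave-one-out mean squared loss equals (1/n) Σ_{i=1}^n Σ_{k=1}^C ((Y_{ik} − (AY)_{ik})/(1 − A_{ii}))². -/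
open Matrix Finset

/-!
Put `M = K + lam I`, so that `I - A = lam M⁻¹`. Extending the coefficients of the predictor trained
without the `i`-th point by a zero at `i` gives a vector `v` with `M v = y - Δ eᵢ`, where `Δ` is the
leave-one-out residual: training on all points with `yᵢ` replaced by the leave-one-out prediction
returns the same predictor. The `i`-th entry of `v = M⁻¹ y - Δ M⁻¹ eᵢ` reads
`0 = (M⁻¹ y)ᵢ - Δ (M⁻¹)ᵢᵢ`. For `y = 0` and `(M⁻¹)ᵢᵢ ≠ 0` this forces `Δ = 0`, hence `v = 0`:
the deleted system is nonsingular.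
-/

section DeletedIndex

theorem mulVec_extend_zero {l m n R : Type*} [Fintype m] [Fintype n] [NonUnitalNonAssocSemiring R]
    {e : m → n} (he : e.Injective) (M : Matrix l n R) (w : m → R) :
    M *ᵥ Function.extend e w 0 = M.submatrix id e *ᵥ w := by
  ext j
  refine (Fintype.sum_of_injective e he _ _ (fun b hb => ?_) fun a => ?_).symm
  · rw [Function.extend_apply' _ _ _ hb, Pi.zero_apply, mul_zero]
  · exact congrArg (M j (e a) * ·) (he.extend_apply w 0 a).symm

/-- The vector `v` with its `i`-th entry deleted, as a function on the index type `{j // j ≠ i}`. -/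
abbrev deleteEntry {ι R : Type*} (v : ι → R) (i : ι) : {j // j ≠ i} → R :=
  fun a => v a

/-- The matrix `M` with its `i`-th row and column deleted, indexed by `{j // j ≠ i}`. -/
abbrev deleteRowCol {ι R : Type*} (M : Matrix ι ι R) (i : ι) :
    Matrix {j // j ≠ i} {j // j ≠ i} R :=
  M.submatrix Subtype.val Subtype.val

variable {ι R : Type*} [Fintype ι] [DecidableEq ι] {i : ι}

theorem mulVec_extend_zero_eq_sub_single [NonUnitalNonAssocRing R] {M : Matrix ι ι R}
    {w : {j // j ≠ i} → R} {y : ι → R}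
    (hw : deleteRowCol M i *ᵥ w = deleteEntry y i) :
    M *ᵥ Function.extend Subtype.val w 0 =
      y - Pi.single i (y i - deleteEntry (M i) i ⬝ᵥ w) := by
  rw [mulVec_extend_zero Subtype.val_injective]
  ext j
  obtain rfl | hj := eq_or_ne j i
  · rw [Pi.sub_apply, Pi.single_eq_same, sub_sub_cancel]
    rfl
  · rw [Pi.sub_apply, Pi.single_eq_of_ne hj, sub_zero]
    exact congrFun hw ⟨j, hj⟩

theorem inv_mulVec_apply_eq_inv_diag_mul [CommRing R] {M : Matrix ι ι R} (hM : IsUnit M)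
    {w : {j // j ≠ i} → R} {y : ι → R}
    (hw : deleteRowCol M i *ᵥ w = deleteEntry y i) :
    (M⁻¹ *ᵥ y) i = M⁻¹ i i * (y i - deleteEntry (M i) i ⬝ᵥ w) := by
  have hsolve : Function.extend Subtype.val w 0 =
      M⁻¹ *ᵥ (y - Pi.single i (y i - deleteEntry (M i) i ⬝ᵥ w)) := by
    rw [← mulVec_extend_zero_eq_sub_single hw, mulVec_mulVec,
      nonsing_inv_mul _ ((isUnit_iff_isUnit_det M).1 hM), one_mulVec]
  have hzero : Function.extend Subtype.val w 0 i = 0 :=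
    Function.extend_apply' _ _ _ fun ⟨a, ha⟩ => a.2 ha
  rw [hsolve, mulVec_sub, Pi.sub_apply, mulVec_single, sub_eq_zero] at hzero
  exact hzero

theorem isUnit_deleteRowCol_of_inv_diag_ne_zero [Field R] {M : Matrix ι ι R} (hM : IsUnit M)
    (hi : M⁻¹ i i ≠ 0) :
    IsUnit (deleteRowCol M i) := by
  rw [← mulVec_injective_iff_isUnit]
  refine (injective_iff_map_eq_zero (mulVecLin _)).2 fun w hw => ?_
  have hw' : deleteRowCol M i *ᵥ w = deleteEntry 0 i := hw
  have hrow : (0 : ι → R) i - deleteEntry (M i) i ⬝ᵥ w = 0 := by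
    have hdiag := inv_mulVec_apply_eq_inv_diag_mul hM hw'
    rw [mulVec_zero, Pi.zero_apply] at hdiag
    exact (mul_eq_zero.1 hdiag.symm).resolve_left hi
  have hker : M *ᵥ Function.extend Subtype.val w 0 = M *ᵥ 0 := by
    rw [mulVec_extend_zero_eq_sub_single hw', hrow, Pi.single_zero, sub_zero, mulVec_zero]
  have hext : Function.extend Subtype.val w 0 = 0 := mulVec_injective_iff_isUnit.2 hM hker
  ext a
  rw [← Subtype.val_injective.extend_apply w 0 a, hext, Pi.zero_apply, Pi.zero_apply]

end DeletedIndex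

section RidgeRegression

variable {ι κ R : Type*} [Fintype ι] [DecidableEq ι]

/-- The smoother `A = K (K + lam I)⁻¹` of kernel ridge regression, which maps the targets to the
in-sample predictions. It is `0` when `K + lam I` is not invertible. -/
noncomputable def ridgeSmoother [CommRing R] (K : Matrix ι ι R) (lam : R) : Matrix ι ι R :=
  K * (K + lam • (1 : Matrix ι ι R))⁻¹

/-- The prediction at the `i`-th point of the kernel ridge regressor trained on the other points,
for a single output with targets `y`. The kernel vector is read off the `i`-th row of `K`. -/
noncomputable def looPrediction [CommRing R] (K : Matrix ι ι R) (lam : R) (y : ι → R) (i : ι) : R :=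
  deleteEntry (K i) i ⬝ᵥ
    ((deleteRowCol K i + lam • (1 : Matrix {j // j ≠ i} {j // j ≠ i} R))⁻¹ *ᵥ deleteEntry y i)

theorem looPrediction_eq_sum [CommRing R] (K : Matrix ι ι R) (lam : R) (y : ι → R) (i : ι) :
    looPrediction K lam y i = ∑ a : {j // j ≠ i}, ∑ b : {j // j ≠ i},
      K i a * (deleteRowCol K i + lam • (1 : Matrix {j // j ≠ i} {j // j ≠ i} R))⁻¹ a b *
        y b := by
  simp only [looPrediction, dotProduct, mulVec, mul_sum, mul_assoc]

theorem ridgeSmoother_eq_one_sub [CommRing R] {K : Matrix ι ι R} {lam : R}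
    (hM : IsUnit (K + lam • (1 : Matrix ι ι R))) :
    ridgeSmoother K lam = 1 - lam • (K + lam • (1 : Matrix ι ι R))⁻¹ := by
  have hinv := mul_nonsing_inv _ ((isUnit_iff_isUnit_det _).1 hM)
  rw [add_mul, smul_mul_assoc, one_mul] at hinv
  exact eq_sub_of_add_eq hinv

theorem looPrediction_eq_dotProduct_deleteRowCol_inv [CommRing R] (K : Matrix ι ι R) (lam : R)
    (y : ι → R) (i : ι) :
    looPrediction K lam y i = deleteEntry ((K + lam • (1 : Matrix ι ι R)) i) i ⬝ᵥ
      ((deleteRowCol (K + lam • (1 : Matrix ι ι R)) i)⁻¹ *ᵥ deleteEntry y i) := by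
  have hrow : deleteEntry ((K + lam • (1 : Matrix ι ι R)) i) i = deleteEntry (K i) i := by
    ext a
    simp [one_apply_ne a.2.symm]
  have hsub : deleteRowCol (K + lam • (1 : Matrix ι ι R)) i = deleteRowCol K i + lam • 1 := by
    ext a b
    simp [one_apply, Subtype.ext_iff]
  rw [hrow, hsub, looPrediction]

theorem inv_mulVec_apply_eq_inv_diag_mul_looResidual [Field R] {K : Matrix ι ι R} {lam : R} {i : ι}
    (hM : IsUnit (K + lam • (1 : Matrix ι ι R)))
    (hi : (K + lam • (1 : Matrix ι ι R))⁻¹ i i ≠ 0) (y : ι → R) :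
    ((K + lam • (1 : Matrix ι ι R))⁻¹ *ᵥ y) i =
      (K + lam • (1 : Matrix ι ι R))⁻¹ i i * (y i - looPrediction K lam y i) := by
  rw [looPrediction_eq_dotProduct_deleteRowCol_inv]
  refine inv_mulVec_apply_eq_inv_diag_mul hM ?_
  have hsub := isUnit_deleteRowCol_of_inv_diag_ne_zero hM hi
  rw [mulVec_mulVec, mul_nonsing_inv _ ((isUnit_iff_isUnit_det _).1 hsub), one_mulVec]

theorem looResidual_eq_div [Field R] {K : Matrix ι ι R} {lam : R} {i : ι}
    (hM : IsUnit (K + lam • (1 : Matrix ι ι R))) (hi : ridgeSmoother K lam i i ≠ 1) (y : ι → R) :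
    y i - looPrediction K lam y i =
      (y i - (ridgeSmoother K lam *ᵥ y) i) / (1 - ridgeSmoother K lam i i) := by
  set G := (K + lam • (1 : Matrix ι ι R))⁻¹
  have hA : ridgeSmoother K lam = 1 - lam • G := ridgeSmoother_eq_one_sub hM
  have hdiag : 1 - ridgeSmoother K lam i i = lam * G i i := by simp [hA]
  have hresidual : y i - (ridgeSmoother K lam *ᵥ y) i = lam * (G *ᵥ y) i := by
    simp [hA, sub_mulVec, smul_mulVec]
  have hne : lam * G i i ≠ 0 := hdiag ▸ sub_ne_zero.2 hi.symm
  rw [hdiag, hresidual, inv_mulVec_apply_eq_inv_diag_mul_looResidual hM (right_ne_zero_of_mul hne),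
    ← mul_assoc, mul_div_cancel_left₀ _ hne]

theorem loo_residual_and_loss_general [Fintype κ] [Field R] {K : Matrix ι ι R} {lam : R}
    (hM : IsUnit (K + lam • (1 : Matrix ι ι R))) (Y : Matrix ι κ R) :
    (∀ i, ridgeSmoother K lam i i ≠ 1 → ∀ k,
      Y i k - looPrediction K lam (Y.col k) i =
        (Y i k - (ridgeSmoother K lam * Y) i k) / (1 - ridgeSmoother K lam i i)) ∧
    ((∀ i, ridgeSmoother K lam i i ≠ 1) →
      ∑ i, ∑ k, (Y i k - looPrediction K lam (Y.col k) i) ^ 2 =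
        ∑ i, ∑ k,
          ((Y i k - (ridgeSmoother K lam * Y) i k) / (1 - ridgeSmoother K lam i i)) ^ 2) := by
  have hresidual : ∀ i, ridgeSmoother K lam i i ≠ 1 → ∀ k,
      Y i k - looPrediction K lam (Y.col k) i =
        (Y i k - (ridgeSmoother K lam * Y) i k) / (1 - ridgeSmoother K lam i i) :=
    fun i hi k => looResidual_eq_div hM hi (Y.col k)
  exact ⟨hresidual, fun hA => sum_congr rfl fun i _ => sum_congr rfl fun k _ => by
    rw [hresidual i (hA i) k]⟩

end RidgeRegression

/-- **Closed-form leave-one-out residual and loss for kernel ridge regression.**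
For a symmetric PSD kernel `K`, regularization `lam > 0`, targets `Y`, smoother
`A = K (K + lam I)⁻¹`, and leave-one-out predictions
`f i k = (k⁽ⁱ⁾)ᵀ (K⁽ⁱ⁾ + lam I)⁻¹ Y⁽ⁱ⁾_{•k}` (submatrices with index `i` deleted),
the LOO residual is `(Y i k - (A Y) i k)/(1 - A i i)`, and the LOO mean squared
loss has the corresponding closed form. -/
theorem loo_residual_and_loss
    (n C : ℕ) (hn : 1 ≤ n) (hC : 1 ≤ C)
    (K : Matrix (Fin n) (Fin n) ℝ) (hK : K.PosSemidef)
    (lam : ℝ) (hlam : 0 < lam)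
    (Y : Matrix (Fin n) (Fin C) ℝ)
    (A : Matrix (Fin n) (Fin n) ℝ)
    (hA : A = K * (K + lam • (1 : Matrix (Fin n) (Fin n) ℝ))⁻¹)
    (f : Fin n → Fin C → ℝ)
    (hf : ∀ (i : Fin n) (k : Fin C),
      f i k = ∑ a : {j : Fin n // j ≠ i}, ∑ b : {j : Fin n // j ≠ i},
        K i a.val *
          ((K.submatrix (fun a : {j : Fin n // j ≠ i} => a.val)
              (fun b : {j : Fin n // j ≠ i} => b.val)
            + lam • (1 : Matrix {j : Fin n // j ≠ i} {j : Fin n // j ≠ i} ℝ))⁻¹ a b) *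
          Y b.val k) :
    (∀ i : Fin n, A i i ≠ 1 → ∀ k : Fin C,
        Y i k - f i k = (Y i k - (A * Y) i k) / (1 - A i i)) ∧
    ((∀ i : Fin n, A i i ≠ 1) →
      (1 / (n : ℝ)) * ∑ i : Fin n, ∑ k : Fin C, (Y i k - f i k) ^ 2 =
      (1 / (n : ℝ)) * ∑ i : Fin n, ∑ k : Fin C,
        ((Y i k - (A * Y) i k) / (1 - A i i)) ^ 2) := by
  obtain rfl : f = fun i k => looPrediction K lam (Y.col k) i := by
    ext i k
    exact (hf i k).trans (looPrediction_eq_sum K lam (Y.col k) i).symm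
  subst hA
  have hM := (PosDef.posSemidef_add hK (PosDef.one.smul hlam)).isUnit
  obtain ⟨hresidual, hloss⟩ := loo_residual_and_loss_general hM Y
  exact ⟨hresidual, fun hA => congrArg (1 / (n : ℝ) * ·) (hloss hA)⟩
end

section
/- Fix an orthogonal matrix V ∈ ℝ^{n×n}, targets Y ∈ ℝ^{n×C}, an index i with V_{in} ≠ 0, a coordinate k, and strictly positive eigenvalues ω_1,…,ω_{n−1} > 0. For ω_n > 0 define Δ_{ik}(n) = Σ_{l=1}^n Y_{lk} (Σ_{j=1}^n (1/ω_j)V_{ij}V_{lj}) / (Σ_{j=1}^n (1/ω_j)V_{ij}²) (the full-rank zero-regularization leave-one-out residual for K = V diag(ω)Vᵀ), and define Δ_{ik}(n−1) = Σ_{l=1}^n Y_{lk} V_{in}V_{ln} / V_{in}² (the rank-(n−1) zero-regularization residual). Then Δ_{ik}(n) → Δ_{ik}(n−1) as ω_n → 0⁺; i.e., the apparent phase transition between rank n−1 and rank n is a smooth interpolation when the smallest eigenvalue tends to zero. -/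
open Matrix Finset Filter

/-!
Multiplying numerator and denominator of the full-rank residual by the vanishing eigenvalue `μ i₀`
leaves their quotient unchanged and turns the weight `1 / μ j` into `μ i₀ / μ j`, which equals `1`
for `j = i₀` and tends to `0` for every other `j`. Only the `i₀` terms survive in the limit.
-/

open scoped Topology

theorem tendsto_update_nhdsNE {ι X : Type*} [DecidableEq ι] [TopologicalSpace X]
    (x : ι → X) (i₀ : ι) (a : X) :
    Tendsto (Function.update x i₀) (𝓝[≠] a)
      (𝓝[{y | y i₀ ≠ a}] (Function.update x i₀ a)) := by
  have update_continuous : Continuous (Function.update x i₀) :=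
    continuous_const.update i₀ continuous_id
  refine update_continuous.continuousWithinAt.tendsto_nhdsWithin fun t ht => ?_
  simpa only [Set.mem_ofPred_eq, Function.update_self, Set.mem_compl_singleton_iff] using ht

section DivisionRing

variable {ι 𝕜 : Type*} [DivisionRing 𝕜] [TopologicalSpace 𝕜] [IsTopologicalDivisionRing 𝕜]
  {ω : ι → 𝕜} {i₀ : ι}

theorem tendsto_mul_one_div_mul_of_ne_zero (h₀ : ω i₀ = 0) {j : ι} (hj : ω j ≠ 0) (c : 𝕜) :
    Tendsto (fun μ : ι → 𝕜 => μ i₀ * (1 / μ j * c)) (𝓝 ω) (𝓝 0) := by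
  have eval_tendsto (i : ι) : Tendsto (fun μ : ι → 𝕜 => μ i) (𝓝 ω) (𝓝 (ω i)) :=
    (continuous_apply i).tendsto ω
  have weight_tendsto : Tendsto (fun μ : ι → 𝕜 => 1 / μ j * c) (𝓝 ω) (𝓝 (1 / ω j * c)) := by
    simpa only [one_div] using ((eval_tendsto j).inv₀ hj).mul_const c
  simpa only [h₀, zero_mul] using (eval_tendsto i₀).mul weight_tendsto

theorem tendsto_mul_sum_one_div_mul [Fintype ι] (h₀ : ω i₀ = 0) (hω : ∀ j ≠ i₀, ω j ≠ 0)
    (f : ι → 𝕜) :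
    Tendsto (fun μ : ι → 𝕜 => μ i₀ * ∑ j, 1 / μ j * f j) (𝓝[{μ | μ i₀ ≠ 0}] ω)
      (𝓝 (f i₀)) := by
  classical
  have term_tendsto (j : ι) :
      Tendsto (fun μ : ι → 𝕜 => μ i₀ * (1 / μ j * f j)) (𝓝[{μ | μ i₀ ≠ 0}] ω)
        (𝓝 (if j = i₀ then f j else 0)) := by
    split_ifs with hj
    · subst hj
      refine tendsto_const_nhds.congr' ?_
      filter_upwards [self_mem_nhdsWithin] with μ hμ
      rw [one_div, mul_inv_cancel_left₀ hμ]
    · exact (tendsto_mul_one_div_mul_of_ne_zero h₀ (hω j hj) (f j)).mono_left nhdsWithin_le_nhds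
  simpa only [mul_sum, sum_ite_eq', mem_univ, if_true] using
    tendsto_finsetSum univ fun j _ => term_tendsto j

end DivisionRing

section Field

variable {ι 𝕜 : Type*} [Fintype ι] [Field 𝕜] [TopologicalSpace 𝕜] [IsTopologicalDivisionRing 𝕜]
  {ω : ι → 𝕜} {i₀ : ι}

theorem tendsto_sum_one_div_mul_div_sum_one_div_mul (h₀ : ω i₀ = 0) (hω : ∀ j ≠ i₀, ω j ≠ 0)
    (f : ι → 𝕜) {g : ι → 𝕜} (hg : g i₀ ≠ 0) :
    Tendsto (fun μ : ι → 𝕜 => (∑ j, 1 / μ j * f j) / ∑ j, 1 / μ j * g j)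
      (𝓝[{μ | μ i₀ ≠ 0}] ω) (𝓝 (f i₀ / g i₀)) := by
  refine ((tendsto_mul_sum_one_div_mul h₀ hω f).div
    (tendsto_mul_sum_one_div_mul h₀ hω g) hg).congr' ?_
  filter_upwards [self_mem_nhdsWithin] with μ hμ
  exact mul_div_mul_left _ _ hμ

theorem loo_residual_rank_phase_transition_smooth_general {m p : Type*} [Fintype m]
    (h₀ : ω i₀ = 0) (hω : ∀ j ≠ i₀, ω j ≠ 0) (V : Matrix m ι 𝕜) (Y : Matrix m p 𝕜)
    {i : m} (hi : V i i₀ ≠ 0) (k : p) :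
    Tendsto
      (fun μ : ι → 𝕜 =>
        ∑ l, Y l k * ((∑ j, 1 / μ j * (V i j * V l j)) / ∑ j, 1 / μ j * V i j ^ 2))
      (𝓝[{μ | μ i₀ ≠ 0}] ω)
      (𝓝 (∑ l, Y l k * (V i i₀ * V l i₀) / V i i₀ ^ 2)) := by
  simp only [mul_div_assoc (Y _ k)]
  exact tendsto_finsetSum univ fun l _ =>
    (tendsto_sum_one_div_mul_div_sum_one_div_mul h₀ hω (fun j => V i j * V l j)
      (pow_ne_zero 2 hi)).const_mul (Y l k)

end Field

/-- **Smooth interpolation between the full-rank and rank-(n−1) leave-one-out residuals.**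
Fix an orthogonal `V`, targets `Y`, the last index `i₀` (`(i₀ : ℕ) = n - 1`), an
index `i` with `V i i₀ ≠ 0`, a coordinate `k`, and eigenvalues `ω j > 0` for
`j ≠ i₀`. Letting the smallest eigenvalue `t = ω_n` tend to `0⁺`, the full-rank
zero-regularization residual
`Δ(n) = ∑ l Y l k (∑ j (1/ω'_j) V i j V l j)/(∑ j (1/ω'_j) V i j ²)`
(with `ω' = ω` except `ω' i₀ = t`) converges to the rank-(n−1) residual
`Δ(n−1) = ∑ l Y l k (V i i₀ V l i₀)/(V i i₀ ²)`. -/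
theorem loo_residual_rank_phase_transition_smooth
    (n C : ℕ) (hn : 1 ≤ n)
    (i₀ : Fin n) (hi₀ : (i₀ : ℕ) = n - 1)
    (V : Matrix (Fin n) (Fin n) ℝ) (hV : V ∈ Matrix.orthogonalGroup (Fin n) ℝ)
    (Y : Matrix (Fin n) (Fin C) ℝ)
    (i : Fin n) (hi : V i i₀ ≠ 0) (k : Fin C)
    (ω : Fin n → ℝ) (hω : ∀ j : Fin n, j ≠ i₀ → 0 < ω j) :
    Tendsto
      (fun t : ℝ =>
        ∑ l : Fin n, Y l k *
          ((∑ j : Fin n, (1 / Function.update ω i₀ t j) * (V i j * V l j)) /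
            (∑ j : Fin n, (1 / Function.update ω i₀ t j) * V i j ^ 2)))
      (nhdsWithin 0 (Set.Ioi 0))
      (nhds (∑ l : Fin n, Y l k * (V i i₀ * V l i₀) / V i i₀ ^ 2)) := by
  have hω_update (j : Fin n) (hj : j ≠ i₀) : Function.update ω i₀ 0 j ≠ 0 := by
    simpa only [Function.update_of_ne hj] using (hω j hj).ne'
  exact (loo_residual_rank_phase_transition_smooth_general (Function.update_self i₀ 0 ω)
    hω_update V Y hi k).comp ((tendsto_update_nhdsNE ω i₀ 0).mono_left (nhdsGT_le_nhdsNE 0))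
end

section
/- Let V ∈ ℝ^{n×n} be orthogonal with V_{in} ≠ 0 for all i, let ω_1,…,ω_{n−1} > 0 and ω_n = 0, set K = V diag(ω)Vᵀ (so rank(K) = n − 1), and let y ∈ ℝ^n. Then the zero-regularization leave-one-out loss at the interpolation threshold satisfies (1/n) Σ_{i=1}^n Δ_i² = (1/n) · (Σ_{l=1}^n y_l V_{ln})² · Σ_{i=1}^n 1/V_{in}², where Δ_i = Σ_{l=1}^n y_l V_{in}V_{ln}/V_{in}² is the rank-(n−1) zero-regularization leave-one-out residual. Moreover, if in addition y ∈ {−1,+1}^n, then (1/n) Σ_{i=1}^n Δ_i² ≥ n (Σ_{l=1}^n y_l V_{ln})². -/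
open Matrix Finset

section LooResidual

variable {ι 𝕜 : Type*} [Fintype ι] [Field 𝕜]

/-- The zero-regularization leave-one-out residual `Δ i` of a kernel matrix whose null space is
spanned by the single vector `v`, for targets `y`. Where `v i = 0` it takes the junk value `0`. -/
def looResidual (v y : ι → 𝕜) (i : ι) : 𝕜 :=
  ∑ l, y l * (v i * v l) / v i ^ 2

theorem looResidual_eq_sum_mul_div (v y : ι → 𝕜) (i : ι) :
    looResidual v y i = (∑ l, y l * v l) / v i := by
  rw [looResidual, sum_div]
  refine sum_congr rfl fun l _ => ?_
  field_simp

theorem sum_looResidual_sq (v y : ι → 𝕜) :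
    ∑ i, looResidual v y i ^ 2 = (∑ l, y l * v l) ^ 2 * ∑ i, 1 / v i ^ 2 := by
  simp only [looResidual_eq_sum_mul_div, div_pow, mul_sum, mul_one_div]

end LooResidual

theorem sum_sq_col_eq_one_of_mem_orthogonalGroup {ι R : Type*} [Fintype ι] [DecidableEq ι]
    [CommRing R] {V : Matrix ι ι R} (hV : V ∈ orthogonalGroup ι R) (j : ι) :
    ∑ i, V i j ^ 2 = 1 := by
  have gram_diag : (Vᵀ * V) j j = 1 := by
    rw [(mem_orthogonalGroup_iff' ι R).1 hV, one_apply_eq]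
  simpa only [mul_apply, transpose_apply, ← sq] using gram_diag

section OrderedField

variable {ι 𝕜 : Type*} [Fintype ι] [Field 𝕜] [LinearOrder 𝕜] [IsStrictOrderedRing 𝕜]

theorem card_sq_div_sum_le_sum_one_div {w : ι → 𝕜} (hw : ∀ i, 0 < w i) :
    (Fintype.card ι : 𝕜) ^ 2 / ∑ i, w i ≤ ∑ i, 1 / w i := by
  simpa using sq_sum_div_le_sum_sq_div univ (fun _ => (1 : 𝕜)) fun i _ => hw i

theorem card_sq_le_sum_one_div_sq {v : ι → 𝕜} (hv_norm : ∑ i, v i ^ 2 = 1)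
    (hv_ne : ∀ i, v i ≠ 0) : (Fintype.card ι : 𝕜) ^ 2 ≤ ∑ i, 1 / v i ^ 2 := by
  simpa only [hv_norm, div_one] using
    card_sq_div_sum_le_sum_one_div fun i => sq_pos_of_ne_zero (hv_ne i)

theorem loo_loss_interpolation_threshold_general
    (v : ι → 𝕜) (hv_norm : ∑ i, v i ^ 2 = 1) (hv_ne : ∀ i, v i ≠ 0) (y : ι → 𝕜) :
    (1 / (Fintype.card ι : 𝕜)) * ∑ i, looResidual v y i ^ 2 =
      (1 / (Fintype.card ι : 𝕜)) * (∑ l, y l * v l) ^ 2 * ∑ i, 1 / v i ^ 2 ∧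
    (Fintype.card ι : 𝕜) * (∑ l, y l * v l) ^ 2 ≤
      (1 / (Fintype.card ι : 𝕜)) * ∑ i, looResidual v y i ^ 2 := by
  rw [sum_looResidual_sq, ← mul_assoc]
  refine ⟨rfl, ?_⟩
  calc (Fintype.card ι : 𝕜) * (∑ l, y l * v l) ^ 2
      = (1 / (Fintype.card ι : 𝕜)) * (∑ l, y l * v l) ^ 2 * (Fintype.card ι : 𝕜) ^ 2 := by
        field_simp
    _ ≤ (1 / (Fintype.card ι : 𝕜)) * (∑ l, y l * v l) ^ 2 * ∑ i, 1 / v i ^ 2 := by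
        gcongr
        exact card_sq_le_sum_one_div_sq hv_norm hv_ne

end OrderedField

/-- **Leave-one-out loss at the interpolation threshold.**
For `K = V diag(ω) Vᵀ` of rank `n − 1` (`V` orthogonal, null eigenvector the last
column `i₀` of `V`, with `V i i₀ ≠ 0` for all `i`) and targets `y`, the
zero-regularization leave-one-out residuals
`Δ i = ∑ l y l (V i i₀ V l i₀)/(V i i₀ ²)` satisfy
`(1/n) ∑ Δ i ² = (1/n) (∑ l y l V l i₀)² ∑ i 1/(V i i₀)²`, and if moreover
`y ∈ {−1,+1}ⁿ` then `(1/n) ∑ Δ i ² ≥ n (∑ l y l V l i₀)²`. -/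
theorem loo_loss_interpolation_threshold
    (n : ℕ) (hn : 1 ≤ n)
    (i₀ : Fin n) (hi₀ : (i₀ : ℕ) = n - 1)
    (V : Matrix (Fin n) (Fin n) ℝ) (hV : V ∈ Matrix.orthogonalGroup (Fin n) ℝ)
    (hVz : ∀ i : Fin n, V i i₀ ≠ 0)
    (ω : Fin n → ℝ) (hω_pos : ∀ j : Fin n, j ≠ i₀ → 0 < ω j) (hω_zero : ω i₀ = 0)
    (K : Matrix (Fin n) (Fin n) ℝ) (hK : K = V * Matrix.diagonal ω * Vᵀ)
    (y : Fin n → ℝ)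
    (Δ : Fin n → ℝ)
    (hΔ : ∀ i : Fin n, Δ i = ∑ l : Fin n, y l * (V i i₀ * V l i₀) / V i i₀ ^ 2) :
    ((1 / (n : ℝ)) * ∑ i : Fin n, Δ i ^ 2 =
      (1 / (n : ℝ)) * (∑ l : Fin n, y l * V l i₀) ^ 2 * ∑ i : Fin n, 1 / V i i₀ ^ 2) ∧
    ((∀ l : Fin n, y l = 1 ∨ y l = -1) →
      (n : ℝ) * (∑ l : Fin n, y l * V l i₀) ^ 2 ≤ (1 / (n : ℝ)) * ∑ i : Fin n, Δ i ^ 2) := by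
  obtain rfl : Δ = looResidual (V · i₀) y := funext hΔ
  simpa only [Fintype.card_fin] using
    (loo_loss_interpolation_threshold_general (V · i₀)
      (sum_sq_col_eq_one_of_mem_orthogonalGroup hV i₀) hVz y).imp_right fun bound _ => bound
end

section
/- For each n ≥ 2 let v^{(n)} be distributed according to the uniform probability measure μ_n on the unit sphere S^{n−1} ⊂ ℝ^n, let y^{(n)} ∈ {−1,+1}^n be arbitrary fixed sign vectors, and define L_n(v) = (1/n)(Σ_{i=1}^n y^{(n)}_i v_i)² · Σ_{i=1}^n 1/v_i² (with the convention L_n(v) = +∞ if some v_i = 0). Then L_n diverges in probability: for every M > 0, μ_n{ v ∈ S^{n−1} : L_n(v) ≤ M } → 0 as n → ∞. (This is the rigorous content of the divergence of the zero-regularization leave-one-out loss at the interpolation threshold when the eigenvector matrix is Haar-distributed on the orthogonal group, since at rank n−1 the leave-one-out loss equals L_n evaluated at the last column of the eigenvector matrix, which is uniform on the sphere.) -/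
open MeasureTheory Finset Filter

/-- The image of a point of the unit sphere of `EuclideanSpace ℝ (Fin n)` under a
linear isometry equivalence (rotation/reflection), as a point of the sphere. -/
noncomputable def sphereRot {n : ℕ}
    (g : EuclideanSpace ℝ (Fin n) ≃ₗᵢ[ℝ] EuclideanSpace ℝ (Fin n))
    (v : Metric.sphere (0 : EuclideanSpace ℝ (Fin n)) 1) :
    Metric.sphere (0 : EuclideanSpace ℝ (Fin n)) 1 :=
  ⟨g v.val, by
    have hv := v.2
    simp only [Metric.mem_sphere, dist_zero_right] at hv ⊢
    rw [g.norm_map]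
    exact hv⟩

/-!
The loss `L_n` is homogeneous of degree `0` in `v`, and `n² / ‖v‖² ≤ ∑ i, 1 / v i ^ 2` by
Sedrakyan's inequality, so `L_n(v) ≤ M` forces `|⟪y, v⟫| ≤ ε ‖y‖ ‖v‖` with `ε = √(M / n) / ‖y‖`:
the direction of `v` lies in a thin band around the equator orthogonal to `y`. By rotation
invariance the mass of this band does not depend on `y`, so `y` may be replaced by a standard
Gaussian vector `x`. After exchanging the order of integration, `v` is fixed and `⟪x, v⟫ / ‖v‖` is
a standard normal variable, which is at most `ε R` in absolute value with probability at most
`ε R`, while `R ≤ ‖x‖` has probability at most `n / R²`. Balancing the two bounds gives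
`2 (ε² n) ^ (1/3) = 2 (M / ‖y‖²) ^ (1/3)`, which tends to `0` because `‖y‖² = n`.
-/

section Gaussian

open ProbabilityTheory Module
open scoped NNReal RealInnerProductSpace

lemma gaussianPDFReal_le (m : ℝ) (v : ℝ≥0) (x : ℝ) :
    gaussianPDFReal m v x ≤ (√(2 * Real.pi * v))⁻¹ := by
  refine mul_le_of_le_one_right (by positivity) (Real.exp_le_one_iff.2 ?_)
  exact div_nonpos_of_nonpos_of_nonneg (neg_nonpos.2 (sq_nonneg _)) (by positivity)

lemma gaussianReal_le_mul_volume (m : ℝ) {v : ℝ≥0} (hv : v ≠ 0) (s : Set ℝ) :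
    gaussianReal m v s ≤ ENNReal.ofReal (√(2 * Real.pi * v))⁻¹ * volume s := by
  rw [gaussianReal_apply m hv, ← setLIntegral_const]
  exact lintegral_mono fun x => ENNReal.ofReal_le_ofReal (gaussianPDFReal_le m v x)

lemma gaussianReal_zero_one_abs_le (t : ℝ) :
    gaussianReal 0 1 {x | |x| ≤ t} ≤ ENNReal.ofReal t := by
  have two_le_sqrt : 2 ≤ √(2 * Real.pi * (1 : ℝ≥0)) := by
    refine Real.le_sqrt_of_sq_le ?_
    push_cast
    linarith [Real.two_le_pi]
  have volume_eq : volume {x : ℝ | |x| ≤ t} = ENNReal.ofReal (2 * t) := by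
    simpa only [Metric.closedBall, Real.dist_eq, sub_zero]
      using Real.volume_closedBall (0 : ℝ) t
  calc gaussianReal 0 1 {x | |x| ≤ t}
      ≤ ENNReal.ofReal (√(2 * Real.pi * (1 : ℝ≥0)))⁻¹ * volume {x : ℝ | |x| ≤ t} :=
        gaussianReal_le_mul_volume 0 one_ne_zero _
    _ ≤ ENNReal.ofReal 2⁻¹ * ENNReal.ofReal (2 * t) := by
        rw [volume_eq]
        gcongr
    _ = ENNReal.ofReal t := by
        rw [← ENNReal.ofReal_mul (by norm_num), inv_mul_cancel_left₀ two_ne_zero]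

variable {E : Type*} [NormedAddCommGroup E] [InnerProductSpace ℝ E] [FiniteDimensional ℝ E]
  [MeasurableSpace E] [BorelSpace E]

lemma stdGaussian_map_inner (v : E) :
    (stdGaussian E).map (fun x => ⟪v, x⟫) = gaussianReal 0 (‖v‖₊ ^ 2) := by
  have h := IsGaussian.map_eq_gaussianReal (μ := stdGaussian E) (innerSL ℝ v)
  rw [integral_strongDual_stdGaussian, variance_dual_stdGaussian, innerSL_apply_norm] at h
  rwa [Real.toNNReal_pow (norm_nonneg v), norm_toNNReal] at h

lemma stdGaussian_abs_inner_le {v : E} (hv : ‖v‖ = 1) (t : ℝ) :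
    stdGaussian E {x | |⟪v, x⟫| ≤ t} ≤ ENNReal.ofReal t := by
  have hmap : (stdGaussian E).map (fun x => ⟪v, x⟫) = gaussianReal 0 1 := by
    rw [stdGaussian_map_inner, show ‖v‖₊ = 1 from NNReal.eq hv, one_pow]
  calc stdGaussian E {x | |⟪v, x⟫| ≤ t}
      ≤ (stdGaussian E).map (fun x => ⟪v, x⟫) {r | |r| ≤ t} :=
        Measure.le_map_apply (by fun_prop) _
    _ ≤ ENNReal.ofReal t := by
        rw [hmap]
        exact gaussianReal_zero_one_abs_le t

lemma integrable_inner_sq_stdGaussian (v : E) :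
    Integrable (fun x => ⟪v, x⟫ ^ 2) (stdGaussian E) :=
  (IsGaussian.memLp_two_id.const_inner v).integrable_sq

lemma integral_inner_sq_stdGaussian (v : E) : ∫ x, ⟪v, x⟫ ^ 2 ∂stdGaussian E = ‖v‖ ^ 2 := by
  have h := variance_dual_stdGaussian (innerSL ℝ v)
  rw [variance_of_integral_eq_zero (by fun_prop) (integral_strongDual_stdGaussian _),
    innerSL_apply_norm] at h
  exact h

lemma integral_norm_sq_stdGaussian : ∫ x, ‖x‖ ^ 2 ∂stdGaussian E = finrank ℝ E := by
  simp_rw [← (stdOrthonormalBasis ℝ E).sum_sq_inner_right]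
  rw [integral_finsetSum _ fun i _ => integrable_inner_sq_stdGaussian _]
  simp [integral_inner_sq_stdGaussian]

lemma stdGaussian_norm_ge_le {R : ℝ} (hR : 0 < R) :
    stdGaussian E {x | R ≤ ‖x‖} ≤ ENNReal.ofReal (finrank ℝ E / R ^ 2) := by
  have integrable_norm_sq : Integrable (fun x => ‖x‖ ^ 2) (stdGaussian E) :=
    IsGaussian.memLp_two_id.integrable_norm_pow two_ne_zero
  have norm_ge_subset : {x : E | R ≤ ‖x‖} ⊆ {x | R ^ 2 ≤ ‖x‖ ^ 2} :=
    fun x hx => pow_le_pow_left₀ hR.le hx 2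
  have markov : R ^ 2 * (stdGaussian E).real {x | R ^ 2 ≤ ‖x‖ ^ 2} ≤ finrank ℝ E := by
    rw [← integral_norm_sq_stdGaussian (E := E)]
    exact mul_meas_ge_le_integral_of_nonneg (ae_of_all _ fun x => sq_nonneg ‖x‖)
      integrable_norm_sq _
  refine (measure_mono norm_ge_subset).trans ?_
  rw [← ofReal_measureReal]
  exact ENNReal.ofReal_le_ofReal ((le_div_iff₀' (by positivity)).2 markov)

end Gaussian

section EquatorialBand

open ProbabilityTheory Module
open scoped RealInnerProductSpace

variable {E : Type*} [NormedAddCommGroup E] [InnerProductSpace ℝ E]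

/-- The set of vectors `x` whose angle with `v` has cosine in `[-ε, ε]`. The condition is multiplied
out, so that membership is symmetric in `v` and `x`; the band contains `0`, and it is everything if
`v = 0`. -/
def equatorialBand (ε : ℝ) (v : E) : Set E :=
  {x | |⟪v, x⟫| ≤ ε * (‖v‖ * ‖x‖)}

lemma mem_equatorialBand_comm {ε : ℝ} {v x : E} :
    x ∈ equatorialBand ε v ↔ v ∈ equatorialBand ε x := by
  simp only [equatorialBand, Set.mem_ofPred_eq, real_inner_comm, mul_comm ‖v‖]

lemma equatorialBand_subset_smul (ε c : ℝ) (v : E) :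
    equatorialBand ε v ⊆ equatorialBand ε (c • v) := by
  intro x hx
  calc |⟪c • v, x⟫| = |c| * |⟪v, x⟫| := by rw [real_inner_smul_left, abs_mul]
    _ ≤ |c| * (ε * (‖v‖ * ‖x‖)) := mul_le_mul_of_nonneg_left hx (abs_nonneg c)
    _ = ε * (‖c • v‖ * ‖x‖) := by rw [norm_smul, Real.norm_eq_abs]; ring

lemma preimage_equatorialBand (g : E ≃ₗᵢ[ℝ] E) (ε : ℝ) (v : E) :
    g ⁻¹' equatorialBand ε (g v) = equatorialBand ε v := by
  simp only [equatorialBand, Set.preimage_ofPred_eq, g.inner_map_map, g.norm_map]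

variable [MeasurableSpace E]

/-- Invariance of a measure under all linear isometries of the space, reflections included. -/
def RotationInvariant (ν : Measure E) : Prop :=
  ∀ g : E ≃ₗᵢ[ℝ] E, ν.map g = ν

variable [BorelSpace E]

lemma measurableSet_equatorialBand (ε : ℝ) (v : E) : MeasurableSet (equatorialBand ε v) :=
  measurableSet_le (f := fun x => |⟪v, x⟫|) (by fun_prop) (by fun_prop)

lemma measurableSet_setOf_mem_equatorialBand [SecondCountableTopology E] (ε : ℝ) :
    MeasurableSet {p : E × E | p.2 ∈ equatorialBand ε p.1} :=
  measurableSet_le (f := fun p : E × E => |⟪p.1, p.2⟫|) (by fun_prop) (by fun_prop)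

lemma RotationInvariant.measure_equatorialBand_le {ν : Measure E} (hν : RotationInvariant ν)
    (ε : ℝ) {w : E} (hw : w ≠ 0) (x : E) :
    ν (equatorialBand ε w) ≤ ν (equatorialBand ε x) := by
  set w' := (‖x‖ / ‖w‖) • w
  have norm_eq : ‖w'‖ = ‖x‖ := by
    rw [norm_smul, norm_div, norm_norm, norm_norm, div_mul_cancel₀ _ (norm_ne_zero_iff.2 hw)]
  let g := (ℝ ∙ (w' - x))ᗮ.reflection
  have g_apply : g w' = x := Submodule.reflection_sub norm_eq
  calc ν (equatorialBand ε w)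
      ≤ ν (equatorialBand ε w') := measure_mono (equatorialBand_subset_smul ε _ w)
    _ = ν (g ⁻¹' equatorialBand ε x) := by rw [← g_apply, preimage_equatorialBand]
    _ = ν (equatorialBand ε x) := by
        rw [← Measure.map_apply (by fun_prop) (measurableSet_equatorialBand ε x), hν g]

lemma RotationInvariant.measure_equatorialBand_le_lintegral [SecondCountableTopology E]
    {ν : Measure E} [SFinite ν] (hν : RotationInvariant ν) (γ : Measure E) [IsProbabilityMeasure γ]
    (ε : ℝ) {w : E} (hw : w ≠ 0) :
    ν (equatorialBand ε w) ≤ ∫⁻ v, γ (equatorialBand ε v) ∂ν := by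
  have hband := measurableSet_setOf_mem_equatorialBand (E := E) ε
  calc ν (equatorialBand ε w)
      = ∫⁻ _, ν (equatorialBand ε w) ∂γ := by simp
    _ ≤ ∫⁻ x, ν (equatorialBand ε x) ∂γ := lintegral_mono (hν.measure_equatorialBand_le ε hw)
    _ = (γ.prod ν) {p | p.2 ∈ equatorialBand ε p.1} := (Measure.prod_apply hband).symm
    _ = ∫⁻ v, γ {x | v ∈ equatorialBand ε x} ∂ν := Measure.prod_apply_symm hband
    _ = ∫⁻ v, γ (equatorialBand ε v) ∂ν := by simp only [mem_equatorialBand_comm, Set.ofPred_mem_eq]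

variable [FiniteDimensional ℝ E]

lemma stdGaussian_equatorialBand_le_add {ε R : ℝ} (hε : 0 ≤ ε) (hR : 0 < R) {v : E} (hv : v ≠ 0) :
    stdGaussian E (equatorialBand ε v) ≤
      ENNReal.ofReal (ε * R) + ENNReal.ofReal (finrank ℝ E / R ^ 2) := by
  set u := ‖v‖⁻¹ • v
  have hu : ‖u‖ = 1 := norm_smul_inv_norm hv
  have band_subset : equatorialBand ε v ⊆ {x | |⟪u, x⟫| ≤ ε * R} ∪ {x | R ≤ ‖x‖} := by
    intro x hx
    have hx' : |⟪u, x⟫| ≤ ε * ‖x‖ := by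
      have hxu : x ∈ equatorialBand ε u := equatorialBand_subset_smul ε ‖v‖⁻¹ v hx
      rwa [equatorialBand, Set.mem_ofPred_eq, hu, one_mul] at hxu
    rcases le_total ‖x‖ R with hxR | hRx
    · exact Or.inl (hx'.trans (mul_le_mul_of_nonneg_left hxR hε))
    · exact Or.inr hRx
  calc stdGaussian E (equatorialBand ε v)
      ≤ stdGaussian E {x | |⟪u, x⟫| ≤ ε * R} + stdGaussian E {x | R ≤ ‖x‖} :=
        (measure_mono band_subset).trans (measure_union_le _ _)
    _ ≤ ENNReal.ofReal (ε * R) + ENNReal.ofReal (finrank ℝ E / R ^ 2) :=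
        add_le_add (stdGaussian_abs_inner_le hu _) (stdGaussian_norm_ge_le hR)

lemma stdGaussian_equatorialBand_le {ε : ℝ} (hε : 0 < ε) {v : E} (hv : v ≠ 0) :
    stdGaussian E (equatorialBand ε v) ≤
      ENNReal.ofReal (2 * (ε ^ 2 * finrank ℝ E) ^ (3⁻¹ : ℝ)) := by
  have : Nontrivial E := nontrivial_of_ne v 0 hv
  have hd : (0 : ℝ) < finrank ℝ E := Nat.cast_pos.2 finrank_pos
  -- This radius makes the two error terms `ε * R` and `finrank ℝ E / R ^ 2` equal.
  set R : ℝ := (finrank ℝ E / ε) ^ (3⁻¹ : ℝ)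
  have hR : 0 < R := by positivity
  have R_cube : R ^ 3 = finrank ℝ E / ε := by
    rw [← Real.rpow_mul_natCast (by positivity)]
    norm_num
  have tail_eq : finrank ℝ E / R ^ 2 = ε * R := by
    rw [div_eq_iff (by positivity), mul_assoc, ← pow_succ', R_cube, mul_div_cancel₀ _ hε.ne']
  have small_eq : ε * R = (ε ^ 2 * finrank ℝ E) ^ (3⁻¹ : ℝ) := by
    rw [Real.eq_rpow_inv (by positivity) (by positivity) three_ne_zero, Real.rpow_ofNat, mul_pow,
      R_cube]
    field_simp
  calc stdGaussian E (equatorialBand ε v)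
      ≤ ENNReal.ofReal (ε * R) + ENNReal.ofReal (finrank ℝ E / R ^ 2) :=
        stdGaussian_equatorialBand_le_add hε.le hR hv
    _ = ENNReal.ofReal (2 * (ε ^ 2 * finrank ℝ E) ^ (3⁻¹ : ℝ)) := by
        rw [tail_eq, ← ENNReal.ofReal_add (by positivity) (by positivity), ← two_mul, small_eq]

theorem RotationInvariant.measure_equatorialBand_le_rpow {ν : Measure E} [SFinite ν]
    (hν : RotationInvariant ν) (hν0 : ∀ᵐ v ∂ν, v ≠ 0) {ε : ℝ} (hε : 0 < ε) {w : E} (hw : w ≠ 0) :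
    ν (equatorialBand ε w) ≤
      ENNReal.ofReal (2 * (ε ^ 2 * finrank ℝ E) ^ (3⁻¹ : ℝ)) * ν Set.univ := by
  calc ν (equatorialBand ε w)
      ≤ ∫⁻ v, stdGaussian E (equatorialBand ε v) ∂ν :=
        hν.measure_equatorialBand_le_lintegral (stdGaussian E) ε hw
    _ ≤ ∫⁻ _, ENNReal.ofReal (2 * (ε ^ 2 * finrank ℝ E) ^ (3⁻¹ : ℝ)) ∂ν :=
        lintegral_mono_ae (hν0.mono fun v hv => stdGaussian_equatorialBand_le hε hv)
    _ = ENNReal.ofReal (2 * (ε ^ 2 * finrank ℝ E) ^ (3⁻¹ : ℝ)) * ν Set.univ := lintegral_const _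

end EquatorialBand

section LeaveOneOutLoss

open scoped RealInnerProductSpace

variable {ι : Type*} [Fintype ι]

/-- The zero-regularization leave-one-out loss at the interpolation threshold, for labels `y` and
null eigenvector `v` of the kernel matrix. It is meaningful only if no coordinate of `v` vanishes:
a term `1 / v i ^ 2` with `v i = 0` counts as `0` here, where the loss should be infinite. -/
noncomputable def looLoss (y : ι → ℝ) (v : EuclideanSpace ℝ ι) : ℝ :=
  1 / (Fintype.card ι : ℝ) * (∑ i, y i * v i) ^ 2 * ∑ i, 1 / v i ^ 2

lemma card_sq_div_norm_sq_le_sum_one_div_sq {v : EuclideanSpace ℝ ι} (hv : ∀ i, v i ≠ 0) :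
    (Fintype.card ι : ℝ) ^ 2 / ‖v‖ ^ 2 ≤ ∑ i, 1 / v i ^ 2 := by
  simpa [EuclideanSpace.real_norm_sq_eq] using
    sq_sum_div_le_sum_sq_div univ (fun _ => (1 : ℝ)) fun i _ => sq_pos_of_ne_zero (hv i)

lemma card_mul_inner_sq_div_le_looLoss (y : ι → ℝ) {v : EuclideanSpace ℝ ι}
    (hv : ∀ i, v i ≠ 0) :
    Fintype.card ι * (⟪WithLp.toLp 2 y, v⟫ ^ 2 / ‖v‖ ^ 2) ≤ looLoss y v := by
  have inner_eq : ⟪WithLp.toLp 2 y, v⟫ = ∑ i, y i * v i := by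
    simp [PiLp.inner_apply, mul_comm]
  calc Fintype.card ι * (⟪WithLp.toLp 2 y, v⟫ ^ 2 / ‖v‖ ^ 2)
      = 1 / (Fintype.card ι : ℝ) * (∑ i, y i * v i) ^ 2 * ((Fintype.card ι : ℝ) ^ 2 / ‖v‖ ^ 2) := by
        rw [inner_eq]
        field_simp
    _ ≤ looLoss y v :=
        mul_le_mul_of_nonneg_left (card_sq_div_norm_sq_le_sum_one_div_sq hv) (by positivity)

lemma mem_equatorialBand_of_looLoss_le {y : ι → ℝ} (hy : y ≠ 0) {v : EuclideanSpace ℝ ι}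
    (hv : ∀ i, v i ≠ 0) {M : ℝ} (hloss : looLoss y v ≤ M) :
    v ∈ equatorialBand (√(M / Fintype.card ι) / ‖WithLp.toLp 2 y‖) (WithLp.toLp 2 y) := by
  have : Nonempty ι := (Function.ne_iff.1 hy).nonempty
  have hcard : (0 : ℝ) < Fintype.card ι := Nat.cast_pos.2 Fintype.card_pos
  have hy_norm : ‖WithLp.toLp 2 y‖ ≠ 0 := by simpa using hy
  have hv_norm : 0 < ‖v‖ := norm_pos_iff.2 fun h => hv (Classical.arbitrary ι) (by simp [h])
  have inner_sq_le : ⟪WithLp.toLp 2 y, v⟫ ^ 2 ≤ M / Fintype.card ι * ‖v‖ ^ 2 := by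
    rw [← div_le_iff₀ (by positivity), le_div_iff₀' hcard]
    exact (card_mul_inner_sq_div_le_looLoss y hv).trans hloss
  calc |⟪WithLp.toLp 2 y, v⟫| ≤ √(M / Fintype.card ι * ‖v‖ ^ 2) := Real.abs_le_sqrt inner_sq_le
    _ = √(M / Fintype.card ι) * ‖v‖ := by
        rw [Real.sqrt_mul' _ (sq_nonneg _), Real.sqrt_sq hv_norm.le]
    _ = √(M / Fintype.card ι) / ‖WithLp.toLp 2 y‖ * (‖WithLp.toLp 2 y‖ * ‖v‖) := by
        rw [← mul_assoc, div_mul_cancel₀ _ hy_norm]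

theorem RotationInvariant.measure_looLoss_le {ν : Measure (EuclideanSpace ℝ ι)} [SFinite ν]
    (hν : RotationInvariant ν) (hν0 : ∀ᵐ v ∂ν, v ≠ 0) {y : ι → ℝ} (hy : y ≠ 0) {M : ℝ}
    (hM : 0 < M) :
    ν {v | (∀ i, v i ≠ 0) ∧ looLoss y v ≤ M} ≤
      ENNReal.ofReal (2 * (M / ∑ i, y i ^ 2) ^ (3⁻¹ : ℝ)) * ν Set.univ := by
  have : Nonempty ι := (Function.ne_iff.1 hy).nonempty
  have hcard : (0 : ℝ) < Fintype.card ι := Nat.cast_pos.2 Fintype.card_pos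
  have hw : WithLp.toLp 2 y ≠ 0 := by simpa using hy
  set ε := √(M / Fintype.card ι) / ‖WithLp.toLp 2 y‖
  have hε : 0 < ε := div_pos (Real.sqrt_pos.2 (div_pos hM hcard)) (norm_pos_iff.2 hw)
  have ε_sq_mul_card : ε ^ 2 * Fintype.card ι = M / ∑ i, y i ^ 2 := by
    rw [div_pow, Real.sq_sqrt (by positivity), EuclideanSpace.real_norm_sq_eq]
    field_simp
  calc ν {v | (∀ i, v i ≠ 0) ∧ looLoss y v ≤ M}
      ≤ ν (equatorialBand ε (WithLp.toLp 2 y)) :=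
        measure_mono fun v hv => mem_equatorialBand_of_looLoss_le hy hv.1 hv.2
    _ ≤ ENNReal.ofReal (2 * (M / ∑ i, y i ^ 2) ^ (3⁻¹ : ℝ)) * ν Set.univ := by
        rw [← ε_sq_mul_card, ← finrank_euclideanSpace (𝕜 := ℝ)]
        exact hν.measure_equatorialBand_le_rpow hν0 hε hw

end LeaveOneOutLoss

section Sphere

variable {n : ℕ} {μ : Measure (Metric.sphere (0 : EuclideanSpace ℝ (Fin n)) 1)}

lemma measurable_sphereRot (g : EuclideanSpace ℝ (Fin n) ≃ₗᵢ[ℝ] EuclideanSpace ℝ (Fin n)) :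
    Measurable (sphereRot g) :=
  (g.continuous.measurable.comp measurable_subtype_coe).subtype_mk

lemma rotationInvariant_map_coe_sphere
    (hμ : ∀ g : EuclideanSpace ℝ (Fin n) ≃ₗᵢ[ℝ] EuclideanSpace ℝ (Fin n),
      μ.map (sphereRot g) = μ) :
    RotationInvariant (μ.map Subtype.val) := by
  intro g
  calc (μ.map Subtype.val).map g = μ.map (g ∘ Subtype.val) :=
        Measure.map_map (by fun_prop) measurable_subtype_coe
    _ = (μ.map (sphereRot g)).map Subtype.val :=
        (Measure.map_map measurable_subtype_coe (measurable_sphereRot g)).symm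
    _ = μ.map Subtype.val := by rw [hμ g]

lemma ae_map_coe_sphere_ne_zero : ∀ᵐ v ∂μ.map Subtype.val, v ≠ 0 := by
  refine (ae_map_iff (by fun_prop) (measurableSet_singleton 0).compl).2 ?_
  exact ae_of_all _ fun v => ne_zero_of_mem_unit_sphere v

lemma measure_sphere_looLoss_le [IsProbabilityMeasure μ]
    (hμ : ∀ g : EuclideanSpace ℝ (Fin n) ≃ₗᵢ[ℝ] EuclideanSpace ℝ (Fin n),
      μ.map (sphereRot g) = μ)
    {y : Fin n → ℝ} (hy : y ≠ 0) {M : ℝ} (hM : 0 < M) :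
    μ {v | (∀ i, v.val i ≠ 0) ∧ looLoss y v.val ≤ M} ≤
      ENNReal.ofReal (2 * (M / ∑ i, y i ^ 2) ^ (3⁻¹ : ℝ)) := by
  have : IsProbabilityMeasure (μ.map Subtype.val) :=
    Measure.isProbabilityMeasure_map (by fun_prop)
  have h := (rotationInvariant_map_coe_sphere hμ).measure_looLoss_le ae_map_coe_sphere_ne_zero hy hM
  rw [measure_univ, mul_one] at h
  exact (Measure.le_map_apply (by fun_prop) _).trans h

end Sphere

theorem loo_loss_diverges_in_probability_general
    (μ : (n : ℕ) → Measure (Metric.sphere (0 : EuclideanSpace ℝ (Fin n)) 1))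
    (hprob : ∀ᶠ n in atTop, IsProbabilityMeasure (μ n))
    (hinv : ∀ᶠ n in atTop, ∀ g : EuclideanSpace ℝ (Fin n) ≃ₗᵢ[ℝ] EuclideanSpace ℝ (Fin n),
      (μ n).map (sphereRot g) = μ n)
    (y : (n : ℕ) → Fin n → ℝ) (hy : Tendsto (fun n => ∑ i, y n i ^ 2) atTop atTop)
    {M : ℝ} (hM : 0 < M) :
    Tendsto (fun n => μ n {v | (∀ i, v.val i ≠ 0) ∧ looLoss (y n) v.val ≤ M}) atTop (nhds 0) := by
  have bound_tendsto : Tendsto (fun n => ENNReal.ofReal (2 * (M / ∑ i, y n i ^ 2) ^ (3⁻¹ : ℝ)))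
      atTop (nhds 0) := by
    simpa using ENNReal.tendsto_ofReal
      (((hy.const_div_atTop M).rpow_const (p := 3⁻¹) (by norm_num)).const_mul 2)
  refine tendsto_of_tendsto_of_tendsto_of_le_of_le' tendsto_const_nhds bound_tendsto
    (Eventually.of_forall fun _ => zero_le) ?_
  filter_upwards [hprob, hinv, hy.eventually_gt_atTop 0] with n _ hinv_n hy_pos
  refine measure_sphere_looLoss_le hinv_n (fun hy_zero => ?_) hM
  simp [hy_zero] at hy_pos

/-- **Divergence in probability of the leave-one-out loss at the interpolation
threshold.** For each `n ≥ 2` let `μ n` be the uniform (rotation-invariant)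
probability measure on the unit sphere `S^{n-1} ⊂ ℝⁿ` and `y n ∈ {−1,+1}ⁿ`
arbitrary sign vectors, and set `L_n(v) = (1/n)(∑ i y n i * v i)² ∑ i 1/(v i)²`
(with `L_n(v) = +∞` when some coordinate of `v` vanishes, so that
`{L_n ≤ M} = {v | (∀ i, v i ≠ 0) ∧ (1/n)(∑ y v)² ∑ 1/v² ≤ M}`). Then for every
`M > 0`, `μ n {L_n ≤ M} → 0` as `n → ∞`. -/
theorem loo_loss_diverges_in_probability
    (μ : (n : ℕ) → Measure (Metric.sphere (0 : EuclideanSpace ℝ (Fin n)) 1))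
    (hprob : ∀ n : ℕ, 2 ≤ n → IsProbabilityMeasure (μ n))
    (hinv : ∀ n : ℕ, 2 ≤ n →
      ∀ g : EuclideanSpace ℝ (Fin n) ≃ₗᵢ[ℝ] EuclideanSpace ℝ (Fin n),
        Measure.map (sphereRot g) (μ n) = μ n)
    (y : (n : ℕ) → Fin n → ℝ)
    (hy : ∀ (n : ℕ) (i : Fin n), y n i = 1 ∨ y n i = -1) :
    ∀ M : ℝ, 0 < M →
      Tendsto
        (fun n : ℕ =>
          μ n {v : Metric.sphere (0 : EuclideanSpace ℝ (Fin n)) 1 |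
            (∀ i : Fin n, v.val i ≠ 0) ∧
            (1 / (n : ℝ)) * (∑ i : Fin n, y n i * v.val i) ^ 2 *
              (∑ i : Fin n, 1 / v.val i ^ 2) ≤ M})
        atTop (nhds 0) := by
  intro M hM
  have sum_sq_eq (n : ℕ) : ∑ i, y n i ^ 2 = n := by simp [fun i => sq_eq_one_iff.2 (hy n i)]
  simpa only [looLoss, Fintype.card_fin] using loo_loss_diverges_in_probability_general μ
    (eventually_atTop.2 ⟨2, hprob⟩) (eventually_atTop.2 ⟨2, hinv⟩) y
    (by simpa only [sum_sq_eq] using tendsto_natCast_atTop_atTop) hM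
end
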